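/- For every c > 0, with b*(c) = (1/c) log(1 + (e^c − 1)/e) and H(b) = (e^{bc} − 1)(1 − b + (1/c) log((1 − e^{−c})/(1 − e^{−bc}))), one has H(b*(c)) = (e^c − 1)/(e·c); consequently (c e^{−c}/(1 − e^{−c})) · H(b*(c)) = 1/e. -/

import Mathlib

/-!
Put `t = (e ^ c - 1) / (e ^ (b * c) - 1)`. Since `1 - e ^ (-x) = e ^ (-x) * (e ^ x - 1)`, the
logarithm in `H b` equals `log t + b * c - c`. Its last two terms cancel the factor `1 - b`, so that
`H b = (e ^ c - 1) / c * (log t / t)`. The cutoff `b*` is the one with `t = e`, where `log t / t`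
takes its maximal value `1 / e`.
-/

namespace MallowsSecretary

open Real

/-- The function `H` for the Mallows parameters `q_n = 1 - c / n`: up to the factor
`c * e ^ (-c) / (1 - e ^ (-c))`, the limiting probability of success of the secretary strategy that
rejects a proportion `b` of the candidates and then accepts the first record. -/
noncomputable def scaledSuccess (c b : ℝ) : ℝ :=
  (exp (b * c) - 1) * (1 - b + (1 / c) * log ((1 - exp (-c)) / (1 - exp (-(b * c)))))

/-- The proportion `b*(c)` of candidates rejected by the asymptotically optimal strategy. -/
noncomputable def optimalCutoff (c : ℝ) : ℝ :=
  (1 / c) * log (1 + (exp c - 1) / exp 1)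

lemma exp_sub_one_ne_zero {x : ℝ} (hx : x ≠ 0) : exp x - 1 ≠ 0 :=
  sub_ne_zero.mpr (mt (exp_eq_one_iff x).mp hx)

lemma one_sub_exp_neg (x : ℝ) : 1 - exp (-x) = exp (-x) * (exp x - 1) := by
  rw [mul_sub_one, ← exp_add, neg_add_cancel, exp_zero]

lemma log_one_sub_exp_neg_div {x y : ℝ} (hx : x ≠ 0) (hy : y ≠ 0) :
    log ((1 - exp (-x)) / (1 - exp (-y))) = log ((exp x - 1) / (exp y - 1)) + (y - x) := by
  have hx' := exp_sub_one_ne_zero hx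
  have hy' := exp_sub_one_ne_zero hy
  calc log ((1 - exp (-x)) / (1 - exp (-y)))
      = log (exp (-x) / exp (-y) * ((exp x - 1) / (exp y - 1))) := by
        rw [one_sub_exp_neg x, one_sub_exp_neg y, mul_div_mul_comm]
    _ = log (exp (y - x)) + log ((exp x - 1) / (exp y - 1)) := by
        rw [← exp_sub, neg_sub_neg, log_mul (exp_ne_zero _) (div_ne_zero hx' hy')]
    _ = log ((exp x - 1) / (exp y - 1)) + (y - x) := by
        rw [log_exp, add_comm]

lemma scaledSuccess_eq_mul_log {c b : ℝ} (hc : c ≠ 0) (hb : b ≠ 0) :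
    scaledSuccess c b =
      (exp (b * c) - 1) / c * log ((exp c - 1) / (exp (b * c) - 1)) := by
  rw [scaledSuccess, log_one_sub_exp_neg_div hc (mul_ne_zero hb hc)]
  field_simp
  ring

lemma one_add_exp_sub_one_div_exp_one_pos (c : ℝ) : 0 < 1 + (exp c - 1) / exp 1 := by
  have he : 1 < exp 1 := one_lt_exp_iff.mpr one_pos
  have h : -1 < (exp c - 1) / exp 1 := by
    rw [lt_div_iff₀ (exp_pos 1)]
    linarith [exp_pos c]
  linarith

lemma exp_optimalCutoff_mul_sub_one {c : ℝ} (hc : c ≠ 0) :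
    exp (optimalCutoff c * c) - 1 = (exp c - 1) / exp 1 := by
  have hlog : optimalCutoff c * c = log (1 + (exp c - 1) / exp 1) := by
    rw [optimalCutoff, mul_right_comm, one_div_mul_cancel hc, one_mul]
  rw [hlog, exp_log (one_add_exp_sub_one_div_exp_one_pos c), add_sub_cancel_left]

lemma optimalCutoff_ne_zero {c : ℝ} (hc : c ≠ 0) : optimalCutoff c ≠ 0 := by
  intro h
  have hzero : (exp c - 1) / exp 1 = 0 := by
    rw [← exp_optimalCutoff_mul_sub_one hc, h, zero_mul, exp_zero, sub_self]
  exact div_ne_zero (exp_sub_one_ne_zero hc) (exp_ne_zero 1) hzero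

theorem scaledSuccess_optimalCutoff {c : ℝ} (hc : c ≠ 0) :
    scaledSuccess c (optimalCutoff c) = (exp c - 1) / (exp 1 * c) := by
  rw [scaledSuccess_eq_mul_log hc (optimalCutoff_ne_zero hc), exp_optimalCutoff_mul_sub_one hc,
    div_div_cancel₀ (exp_sub_one_ne_zero hc), log_exp, mul_one, div_div]

lemma mul_exp_neg_div_one_sub_exp_neg (c : ℝ) :
    c * exp (-c) / (1 - exp (-c)) = c / (exp c - 1) := by
  rw [one_sub_exp_neg, mul_comm c, mul_div_mul_left _ _ (exp_ne_zero _)]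

end MallowsSecretary

open MallowsSecretary in
theorem stmt_19_general {c : ℝ} (hc : c ≠ 0) :
    scaledSuccess c (optimalCutoff c) = (Real.exp c - 1) / (Real.exp 1 * c) ∧
      c * Real.exp (-c) / (1 - Real.exp (-c)) * scaledSuccess c (optimalCutoff c) =
        (Real.exp 1)⁻¹ := by
  refine ⟨scaledSuccess_optimalCutoff hc, ?_⟩
  have hexp := exp_sub_one_ne_zero hc
  rw [scaledSuccess_optimalCutoff hc, mul_exp_neg_div_one_sub_exp_neg]
  field_simp

theorem stmt_19 (c : ℝ) (hc : 0 < c) :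
    let H : ℝ → ℝ := fun b => (Real.exp (b * c) - 1) *
      (1 - b + (1 / c) * Real.log ((1 - Real.exp (-c)) / (1 - Real.exp (-(b * c)))))
    let bstar : ℝ := (1 / c) * Real.log (1 + (Real.exp c - 1) / Real.exp 1)
    H bstar = (Real.exp c - 1) / (Real.exp 1 * c) ∧
      c * Real.exp (-c) / (1 - Real.exp (-c)) * H bstar = (Real.exp 1)⁻¹ :=
  stmt_19_general hc.ne'
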